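/- There is a constant C > 0 depending only on the dimension d such that for every locally finite nonnegative Borel measure ν on ℝ^d and every locally integrable vector field v : ℝ^d → ℝ^d connecting ν and m_d, one has Tra(ν) ≤ C·Ra(v). In particular, Tra(ν) ≤ C·inf_v Ra(v), the infimum being over all vector fields v connecting ν and m_d. -/

import Mathlib

/-!
Fix `r > 0` and let `M` be the essential supremum of `|w|`, where `w = v * χ_r`; it suffices to
bound `Tra ν volume` by `C * (r + M)`. The proof discretizes at scale `s ~ r + M` and builds the
transportation explicitly, without a marriage theorem.

Take a smooth partition of unity `ψ_z` (`cell`) on the lattice of mesh `s`, and its average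
`θ_z = χ_r * ψ_z` (`smear`), again a smooth partition of unity. Put `a_z = ∫ θ_z dν` and
`b_z = ∫ θ_z dm`. Testing the equation `div v = ν - m` against `θ_z` and moving the average onto
`v` gives `∫ ⟨w, ∇ψ_z⟩ = b_z - a_z` (`Connects.fderiv_convChi`).

The antisymmetric quantities `f(z, z') = ∫ (ψ_z ⟨w, ∇ψ_z'⟩ - ψ_z' ⟨w, ∇ψ_z⟩)` (`flow`) vanish
unless `z` and `z'` are close, and satisfy `∑_z' f(z, z') = a_z - b_z` because `∑ ψ_z' = 1` and
`∑ ∇ψ_z' = 0` (`sum_flow`). Moreover `∑_z' |f(z, z')|` is of order at most `M * s^(d-1)`, hence at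
most `b_z`, which is of order `s^d`, as soon as `s` is a large multiple of `M`. A flow that is so
small is realized in one step: send `max (f(z, z')) 0` from `z` to `z'` and leave the rest in
place (`exists_matrix`). Spreading the resulting transport matrix over the product measures
`(θ_z ν) ⊗ (θ_z' m)` gives a transportation of range `O(r + s)` (`Tra_le_of_matrix`).
-/

open MeasureTheory Metric Set Bornology
open scoped ENNReal RealInnerProductSpace

noncomputable section

/-- `d`-dimensional Euclidean space. -/
abbrev Euc (d : ℕ) : Type := EuclideanSpace ℝ (Fin d)

/-- The closed support of a measure: the set of points all of whose neighbourhoods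
have positive measure. -/
def msupport {X : Type*} [TopologicalSpace X] [MeasurableSpace X] (μ : Measure X) : Set X :=
  {x | ∀ U ∈ nhds x, μ U ≠ 0}

/-- `γ` is a transportation from `ν₁` to `ν₂`: a locally finite nonnegative Borel measure
on the product whose first marginal is `ν₁` and whose second marginal is `ν₂`. -/
def IsTransport {d : ℕ} (ν₁ ν₂ : Measure (Euc d)) (γ : Measure (Euc d × Euc d)) : Prop :=
  IsLocallyFiniteMeasure γ ∧ γ.map Prod.fst = ν₁ ∧ γ.map Prod.snd = ν₂

/-- The transportation distance `Tra(ν₁, ν₂)`: the infimum over all transportations `γ`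
of `sup {|x−y| : (x,y) ∈ spt γ}`, with value `∞` if no transportation exists. -/
def Tra {d : ℕ} (ν₁ ν₂ : Measure (Euc d)) : ℝ≥0∞ :=
  ⨅ γ : {γ : Measure (Euc d × Euc d) // IsTransport ν₁ ν₂ γ},
    ⨆ p ∈ msupport γ.1, edist p.1 p.2

/-- The dual distance `Di(ν₁, ν₂)`: the infimum of those `r ∈ (0,∞)` such that
`ν₁ B ≤ ν₂ (B_{+r})` and `ν₂ B ≤ ν₁ (B_{+r})` for every bounded Borel set `B`,
where `B_{+r}` is the closed `r`-neighbourhood of `B` (`inf ∅ = ∞`). -/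
def Di {d : ℕ} (ν₁ ν₂ : Measure (Euc d)) : ℝ≥0∞ :=
  sInf (ENNReal.ofReal ''
    {r : ℝ | 0 < r ∧ ∀ B : Set (Euc d), IsBounded B → MeasurableSet B →
      ν₁ B ≤ ν₂ (cthickening r B) ∧ ν₂ B ≤ ν₁ (cthickening r B)})

/-- The normalized indicator `χ_r` of the closed ball of radius `r` centered at the origin. -/
def chi (d : ℕ) (r : ℝ) (x : Euc d) : ℝ :=
  (volume (closedBall (0 : Euc d) r)).toReal⁻¹ * (closedBall (0 : Euc d) r).indicator 1 x

/-- The convolution `v * χ_r` of a vector field `v` with the normalized indicator `χ_r`. -/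
def convChi {d : ℕ} (v : Euc d → Euc d) (r : ℝ) (x : Euc d) : Euc d :=
  ∫ y, chi d r (x - y) • v y

/-- `Ra(v) = inf_{r>0} { r + ‖v * χ_r‖_∞ }`. -/
def Ra {d : ℕ} (v : Euc d → Euc d) : ℝ≥0∞ :=
  ⨅ (r : ℝ) (_ : 0 < r),
    ENNReal.ofReal r + essSup (fun x => (‖convChi v r x‖₊ : ℝ≥0∞)) volume

/-- `R̃a(v) = inf_{r>0} { r + ‖ |v| * χ_r ‖_∞ }`. -/
def RaTilde {d : ℕ} (v : Euc d → Euc d) : ℝ≥0∞ :=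
  ⨅ (r : ℝ) (_ : 0 < r),
    ENNReal.ofReal r +
      essSup (fun x => ∫⁻ y, ENNReal.ofReal (chi d r (x - y)) * (‖v y‖₊ : ℝ≥0∞)) volume

/-- The vector field `v` connects the measures `ν` and `m_d`: `div v = ν − m_d` weakly,
i.e. `∫ ⟨v, ∇φ⟩ dm_d = −∫ φ d(ν − m_d)` for all smooth compactly supported `φ`. -/
def Connects {d : ℕ} (v : Euc d → Euc d) (ν : Measure (Euc d)) : Prop :=
  ∀ φ : Euc d → ℝ, ContDiff ℝ (⊤ : ℕ∞) φ → HasCompactSupport φ →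
    ∫ x, ⟪v x, gradient φ x⟫ ∂volume = (∫ x, φ x ∂volume) - ∫ x, φ x ∂ν

/-- The Laplacian of `u : ℝ^d → ℝ`, as the sum of the second partial derivatives
along the coordinate directions. -/
def lap {d : ℕ} (u : Euc d → ℝ) (x : Euc d) : ℝ :=
  ∑ i : Fin d,
    fderiv ℝ (fun y => fderiv ℝ u y (EuclideanSpace.single i (1 : ℝ))) x
      (EuclideanSpace.single i (1 : ℝ))

/-- The unit lattice cube `∏ i [aᵢ, aᵢ+1]` with integer corner `a`. -/
def latticeCube {d : ℕ} (a : Fin d → ℤ) : Set (Euc d) :=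
  {x | ∀ i, (a i : ℝ) ≤ x i ∧ x i ≤ (a i : ℝ) + 1}

/-- `U` is a finite union of unit lattice cubes. -/
def IsFiniteUnionUnitCubes {d : ℕ} (U : Set (Euc d)) : Prop :=
  ∃ s : Finset (Fin d → ℤ), U = ⋃ a ∈ s, latticeCube a

/-- `U_{+F} = {x : ∃ y ∈ U, (x,y) ∈ F}`. -/
def plusF {d : ℕ} (F : Set (Euc d × Euc d)) (U : Set (Euc d)) : Set (Euc d) :=
  {x | ∃ y ∈ U, (x, y) ∈ F}

/-- The point of `ℝ^d` with integer coordinates `z ∈ ℤ^d`. -/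
def latticePoint {d : ℕ} (z : Fin d → ℤ) : Euc d :=
  (WithLp.equiv 2 (Fin d → ℝ)).symm fun i => (z i : ℝ)

/-- The uniform probability measure on the closed unit ball centered at `x`. -/
def eta {d : ℕ} (x : Euc d) : Measure (Euc d) :=
  (volume (closedBall x 1))⁻¹ • volume.restrict (closedBall x 1)

/-- The measure `ν * χ_r`, with density `x ↦ ∫ χ_r(x−y) dν(y)` w.r.t. Lebesgue measure. -/
def convMeasure {d : ℕ} (ν : Measure (Euc d)) (r : ℝ) : Measure (Euc d) :=
  volume.withDensity fun x => ∫⁻ y, ENNReal.ofReal (chi d r (x - y)) ∂ν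

/-! ### Transportations from transport matrices -/

lemma coeff_sum {ι : Type*} (t : ι → ι → ℝ≥0∞) (a b : ι → ℝ≥0∞)
    (hrow : ∀ i, ∑' j, t i j = a i) (hcol : ∀ j, ∑' i, t i j = b j)
    (ha : ∀ i, a i ≠ ∞) (hb : ∀ i, b i ≠ ∞) (i : ι) (hi : a i ≠ 0) :
    ∑' j, t i j * (a i)⁻¹ * (b j)⁻¹ * b j = 1 := by
  have h : ∀ j, t i j * (a i)⁻¹ * (b j)⁻¹ * b j = t i j * (a i)⁻¹ := by
    intro j
    by_cases hj : b j = 0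
    · have : t i j = 0 := by
        have := ENNReal.le_tsum (f := fun i => t i j) i
        rw [hcol j, hj] at this
        simpa using this
      simp [this]
    · rw [mul_assoc, ENNReal.inv_mul_cancel hj (hb j), mul_one]
  simp_rw [h]
  rw [ENNReal.tsum_mul_right, hrow, ENNReal.mul_inv_cancel hi (ha i)]

/-- Let `θ` be a countable partition of unity. A matrix `t` transporting the masses `∫ θ i dν` to
the masses `∫ θ j dm` induces the transportation
`∑ i j, t i j / (a i * b j) • (θ i ν) ⊗ (θ j m)` from `ν` to `m`. -/
lemma Tra_le_of_matrix {d : ℕ} {ι : Type*} [Countable ι] (ν m : Measure (Euc d))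
    [IsLocallyFiniteMeasure ν] [SFinite m] (θ : ι → Euc d → ℝ≥0∞)
    (hθ : ∀ i, Measurable (θ i)) (hsum : ∀ x, ∑' i, θ i x = 1) (t : ι → ι → ℝ≥0∞)
    (hrow : ∀ i, ∑' j, t i j = ∫⁻ x, θ i x ∂ν) (hcol : ∀ j, ∑' i, t i j = ∫⁻ x, θ j x ∂m)
    (ha : ∀ i, ∫⁻ x, θ i x ∂ν ≠ ∞) (hb : ∀ i, ∫⁻ x, θ i x ∂m ≠ ∞) (R : ℝ≥0∞)
    (hR : ∀ i j x y, t i j ≠ 0 → θ i x ≠ 0 → θ j y ≠ 0 → edist x y ≤ R) :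
    Tra ν m ≤ R := by
  set a : ι → ℝ≥0∞ := fun i => ∫⁻ x, θ i x ∂ν with ha_def
  set b : ι → ℝ≥0∞ := fun i => ∫⁻ x, θ i x ∂m with hb_def
  set γ : Measure (Euc d × Euc d) := Measure.sum fun p : ι × ι =>
    (t p.1 p.2 * (a p.1)⁻¹ * (b p.2)⁻¹) •
      (ν.withDensity (θ p.1)).prod (m.withDensity (θ p.2)) with hγ
  have hdecomp : ∀ (μ : Measure (Euc d)) (S : Set (Euc d)), MeasurableSet S →
      ∑' i, μ.withDensity (θ i) S = μ S := by
    intro μ S hS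
    simp_rw [withDensity_apply _ hS]
    rw [← lintegral_tsum fun i => (hθ i).aemeasurable]
    simp [hsum]
  have hfst : γ.map Prod.fst = ν := by
    ext S hS
    rw [Measure.map_apply measurable_fst hS, hγ, Measure.sum_apply _ (measurable_fst hS),
      ENNReal.tsum_prod (f := fun i j => ((t i j * (a i)⁻¹ * (b j)⁻¹) •
      (ν.withDensity (θ i)).prod (m.withDensity (θ j))) (Prod.fst ⁻¹' S)), ← hdecomp ν S hS]
    congr 1; ext i
    have hpre : (Prod.fst ⁻¹' S : Set (Euc d × Euc d)) = S ×ˢ univ := by ext; simp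
    have hj : ∀ j, ((t i j * (a i)⁻¹ * (b j)⁻¹) •
        (ν.withDensity (θ i)).prod (m.withDensity (θ j))) (Prod.fst ⁻¹' S) =
        (t i j * (a i)⁻¹ * (b j)⁻¹ * b j) * ν.withDensity (θ i) S := by
      intro j
      rw [hpre, Measure.smul_apply, Measure.prod_prod, withDensity_apply _ MeasurableSet.univ,
        smul_eq_mul]
      simp only [Measure.restrict_univ, hb_def]
      ring
    simp_rw [hj]
    rw [ENNReal.tsum_mul_right]
    -- If `a i = 0`, the coefficients are junk, but `ν.withDensity (θ i)` vanishes.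
    by_cases hi : a i = 0
    · have : ν.withDensity (θ i) S = 0 := by
        refine measure_mono_null (subset_univ S) ?_
        rw [withDensity_apply _ MeasurableSet.univ]
        simpa [ha_def] using hi
      simp [this]
    · rw [coeff_sum t a b hrow hcol ha hb i hi, one_mul]
  have hsnd : γ.map Prod.snd = m := by
    ext S hS
    rw [Measure.map_apply measurable_snd hS, hγ, Measure.sum_apply _ (measurable_snd hS),
      ENNReal.tsum_prod (f := fun i j => ((t i j * (a i)⁻¹ * (b j)⁻¹) •
      (ν.withDensity (θ i)).prod (m.withDensity (θ j))) (Prod.snd ⁻¹' S)), ENNReal.tsum_comm,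
      ← hdecomp m S hS]
    congr 1; ext j
    have hpre : (Prod.snd ⁻¹' S : Set (Euc d × Euc d)) = univ ×ˢ S := by ext; simp
    have hi : ∀ i, ((t i j * (a i)⁻¹ * (b j)⁻¹) •
        (ν.withDensity (θ i)).prod (m.withDensity (θ j))) (Prod.snd ⁻¹' S) =
        (t i j * (b j)⁻¹ * (a i)⁻¹ * a i) * m.withDensity (θ j) S := by
      intro i
      rw [hpre, Measure.smul_apply, Measure.prod_prod, withDensity_apply _ MeasurableSet.univ,
        smul_eq_mul]
      simp only [Measure.restrict_univ, ha_def]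
      ring
    simp_rw [hi]
    rw [ENNReal.tsum_mul_right]
    by_cases hj : b j = 0
    · have : m.withDensity (θ j) S = 0 := by
        refine measure_mono_null (subset_univ S) ?_
        rw [withDensity_apply _ MeasurableSet.univ]
        simpa [hb_def] using hj
      simp [this]
    · rw [coeff_sum (fun j i => t i j) b a hcol hrow hb ha j hj, one_mul]
  -- Local finiteness only needs the first marginal to be locally finite.
  have hloc : IsLocallyFiniteMeasure γ := by
    refine ⟨fun p => ?_⟩
    obtain ⟨U, hU, hUfin⟩ := ν.finiteAt_nhds p.1
    obtain ⟨V, hVU, hVo, hpV⟩ := _root_.mem_nhds_iff.1 hU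
    refine ⟨Prod.fst ⁻¹' V, continuous_fst.continuousAt (hVo.mem_nhds hpV), ?_⟩
    rw [← Measure.map_apply measurable_fst hVo.measurableSet, hfst]
    exact (measure_mono hVU).trans_lt hUfin
  refine (iInf_le _ ⟨γ, hloc, hfst, hsnd⟩).trans (iSup₂_le fun p hp => ?_)
  by_contra! hlt
  have hopen : IsOpen {q : Euc d × Euc d | R < edist q.1 q.2} :=
    isOpen_lt continuous_const (continuous_fst.edist continuous_snd)
  refine hp _ (hopen.mem_nhds hlt) ?_
  change γ _ = 0
  rw [hγ, Measure.sum_apply _ hopen.measurableSet, ENNReal.tsum_eq_zero]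
  rintro ⟨i, j⟩
  by_cases ht : t i j = 0
  · simp [ht]
  rw [Measure.smul_apply, prod_withDensity (hθ i) (hθ j),
    withDensity_apply _ hopen.measurableSet, setLIntegral_congr_fun hopen.measurableSet
      (g := fun _ => 0)]
  · simp
  · intro q hq
    by_contra hne
    obtain ⟨h1, h2⟩ := mul_ne_zero_iff.1 hne
    exact absurd (hR i j q.1 q.2 ht h1 h2) (not_le.2 hq)

/-! ### A smooth partition of unity indexed by the lattice -/

/-- A smooth function on `ℝ`, zero outside `(-1, 1)`, whose integer translates add up to `1`. -/
def hat (t : ℝ) : ℝ := Real.smoothTransition (t + 1) - Real.smoothTransition t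

lemma hat_nonneg (t : ℝ) : 0 ≤ hat t :=
  sub_nonneg.2 (Real.smoothTransition.monotone (by linarith))

lemma hat_le_one (t : ℝ) : hat t ≤ 1 := by
  have h1 := Real.smoothTransition.le_one (t + 1)
  have h2 := Real.smoothTransition.nonneg t
  unfold hat; linarith

lemma hat_eq_zero {t : ℝ} (ht : 1 ≤ |t|) : hat t = 0 := by
  unfold hat
  rcases le_abs'.1 ht with h | h
  · rw [Real.smoothTransition.zero_of_nonpos (by linarith),
      Real.smoothTransition.zero_of_nonpos (by linarith), sub_zero]
  · rw [Real.smoothTransition.one_of_one_le (by linarith),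
      Real.smoothTransition.one_of_one_le (by linarith), sub_self]

lemma hat_contDiff : ContDiff ℝ (⊤ : ℕ∞) hat :=
  (Real.smoothTransition.contDiff.comp (contDiff_id.add contDiff_const)).sub
    Real.smoothTransition.contDiff

/-- The sum telescopes, since `hat` is a difference of two translates of a smooth step. -/
lemma sum_hat {t : ℝ} {m : ℤ} (h : |t - m| ≤ 2) :
    ∑ n ∈ Finset.Icc (m - 2) (m + 2), hat (t - n) = 1 := by
  have hIcc : Finset.Icc (m - 2) (m + 2) = {m - 2, m - 1, m, m + 1, m + 2} := by
    ext n; simp only [Finset.mem_Icc, Finset.mem_insert, Finset.mem_singleton]; omega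
  obtain ⟨h1, h2⟩ := abs_le.1 h
  rw [hIcc]
  repeat rw [Finset.sum_insert (by simp only [Finset.mem_insert, Finset.mem_singleton]; omega)]
  rw [Finset.sum_singleton]
  push_cast
  unfold hat
  rw [show t - (m - 2 : ℝ) + 1 = t - m + 3 by ring, show t - (m - 2 : ℝ) = t - m + 2 by ring,
    show t - (m - 1 : ℝ) + 1 = t - m + 2 by ring, show t - (m - 1 : ℝ) = t - m + 1 by ring,
    show t - (m + 1 : ℝ) + 1 = t - m by ring, show t - (m + 1 : ℝ) = t - m - 1 by ring,
    show t - (m + 2 : ℝ) + 1 = t - m - 1 by ring, show t - (m + 2 : ℝ) = t - m - 2 by ring,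
    Real.smoothTransition.one_of_one_le (x := t - m + 3) (by linarith),
    Real.smoothTransition.zero_of_nonpos (x := t - m - 2) (by linarith)]
  ring

/-- The tensor power of `hat`: a smooth function on `ℝ^d`, zero outside `(-1, 1)^d`, whose lattice
translates add up to `1`. -/
def bump (d : ℕ) (x : Euc d) : ℝ := ∏ i, hat (x i)

lemma bump_contDiff (d : ℕ) : ContDiff ℝ (⊤ : ℕ∞) (bump d) :=
  contDiff_prod fun i _ => hat_contDiff.comp (EuclideanSpace.proj (𝕜 := ℝ) i).contDiff

lemma bump_nonneg {d : ℕ} (x : Euc d) : 0 ≤ bump d x :=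
  Finset.prod_nonneg fun _ _ => hat_nonneg _

lemma bump_le_one {d : ℕ} (x : Euc d) : bump d x ≤ 1 :=
  Finset.prod_le_one (fun _ _ => hat_nonneg _) fun _ _ => hat_le_one _

lemma abs_lt_one_of_bump_ne_zero {d : ℕ} {x : Euc d} (h : bump d x ≠ 0) (i : Fin d) :
    |x i| < 1 := by
  by_contra! hi
  exact h (Finset.prod_eq_zero (Finset.mem_univ i) (hat_eq_zero hi))

lemma abs_le_one_of_mem_tsupport {d : ℕ} {x : Euc d} (h : x ∈ tsupport (bump d)) (i : Fin d) :
    |x i| ≤ 1 := by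
  have hc : IsClosed {x : Euc d | |x i| ≤ 1} :=
    isClosed_le ((EuclideanSpace.proj (𝕜 := ℝ) i).continuous.abs) continuous_const
  exact closure_minimal (fun y hy => (abs_lt_one_of_bump_ne_zero hy i).le) hc h

lemma norm_le_of_abs_le {d : ℕ} {x : Euc d} {c : ℝ} (h : ∀ i, |x i| ≤ c) :
    ‖x‖ ≤ d * c := by
  rcases Nat.eq_zero_or_pos d with rfl | hd
  · simp [Subsingleton.elim x 0]
  have hc : 0 ≤ c := (abs_nonneg _).trans (h ⟨0, hd⟩)
  have hd' : (1 : ℝ) ≤ d := by exact_mod_cast hd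
  rw [EuclideanSpace.norm_eq, Real.sqrt_le_left (by positivity)]
  calc ∑ i, ‖x i‖ ^ 2 ≤ ∑ _i : Fin d, c ^ 2 :=
        Finset.sum_le_sum fun i _ => by
          rw [Real.norm_eq_abs]; exact pow_le_pow_left₀ (abs_nonneg _) (h i) 2
    _ = d * c ^ 2 := by simp
    _ ≤ (d * c) ^ 2 := by nlinarith [mul_nonneg (sub_nonneg.2 hd') (sq_nonneg c), sq_nonneg c]

lemma bump_hasCompactSupport (d : ℕ) : HasCompactSupport (bump d) :=
  HasCompactSupport.of_support_subset_isCompact (isCompact_closedBall 0 (d * 1)) fun x hx => by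
    rw [mem_closedBall_zero_iff]
    exact norm_le_of_abs_le fun i => (abs_lt_one_of_bump_ne_zero hx i).le

lemma integral_bump_pos (d : ℕ) : 0 < ∫ x, bump d x := by
  refine (bump_contDiff d).continuous.integral_pos_of_hasCompactSupport_nonneg_nonzero
    (x := 0) (bump_hasCompactSupport d) (fun x => bump_nonneg x) ?_
  simp [bump, hat, Real.smoothTransition.zero, Real.smoothTransition.one]

/-- The lattice points at sup-distance at most `2` from `z`. -/
def nbr {d : ℕ} (z : Fin d → ℤ) : Finset (Fin d → ℤ) :=
  Fintype.piFinset fun i => Finset.Icc (z i - 2) (z i + 2)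

lemma mem_nbr {d : ℕ} {z w : Fin d → ℤ} : w ∈ nbr z ↔ ∀ i, |z i - w i| ≤ 2 := by
  simp only [nbr, Fintype.mem_piFinset, Finset.mem_Icc]
  refine forall_congr' fun i => ?_
  rw [abs_le]; omega

lemma mem_nbr_comm {d : ℕ} {z w : Fin d → ℤ} : w ∈ nbr z ↔ z ∈ nbr w := by
  simp only [mem_nbr, abs_sub_comm]

lemma card_nbr {d : ℕ} (z : Fin d → ℤ) : (nbr z).card = 5 ^ d := by
  rw [nbr, Fintype.card_piFinset]
  simp only [Int.card_Icc]
  rw [Finset.prod_congr rfl (g := fun _ => 5) (fun i _ => by omega)]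
  simp

lemma latticePoint_apply {d : ℕ} (z : Fin d → ℤ) (i : Fin d) : latticePoint z i = (z i : ℝ) := rfl

lemma sum_bump {d : ℕ} {x : Euc d} {z : Fin d → ℤ} (h : ∀ i, |x i - z i| ≤ 2) :
    ∑ w ∈ nbr z, bump d (x - latticePoint w) = 1 := by
  simp only [bump, PiLp.sub_apply, latticePoint_apply]
  rw [nbr, ← Finset.prod_univ_sum (fun i => Finset.Icc (z i - 2) (z i + 2))
    (fun i (n : ℤ) => hat (x i - n))]
  exact Finset.prod_eq_one fun i _ => sum_hat (h i)

/-- The smooth partition of unity of mesh `s`: `cell s z` lives on the cube of side `2 * s`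
centred at `s * z`. -/
def cell {d : ℕ} (s : ℝ) (z : Fin d → ℤ) (x : Euc d) : ℝ :=
  bump d (s⁻¹ • x - latticePoint z)

lemma cell_contDiff {d : ℕ} (s : ℝ) (z : Fin d → ℤ) : ContDiff ℝ (⊤ : ℕ∞) (cell s z) :=
  (bump_contDiff d).comp ((contDiff_const_smul _).sub contDiff_const)

lemma cell_nonneg {d : ℕ} (s : ℝ) (z : Fin d → ℤ) (x : Euc d) : 0 ≤ cell s z x := bump_nonneg _

lemma cell_le_one {d : ℕ} (s : ℝ) (z : Fin d → ℤ) (x : Euc d) : cell s z x ≤ 1 := bump_le_one _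

lemma abs_lt_of_cell_ne_zero {d : ℕ} {s : ℝ} {z : Fin d → ℤ} {x : Euc d} (h : cell s z x ≠ 0)
    (i : Fin d) : |s⁻¹ * x i - z i| < 1 := abs_lt_one_of_bump_ne_zero h i

lemma abs_le_of_mem_tsupport_cell {d : ℕ} {s : ℝ} {z : Fin d → ℤ} {x : Euc d}
    (h : x ∈ tsupport (cell s z)) (i : Fin d) : |s⁻¹ * x i - z i| ≤ 1 := by
  refine abs_le_one_of_mem_tsupport (x := s⁻¹ • x - latticePoint z) ?_ i
  exact tsupport_comp_subset_preimage (bump d) (f := fun x : Euc d => s⁻¹ • x - latticePoint z)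
    (by fun_prop) h

lemma cell_hasCompactSupport {d : ℕ} {s : ℝ} (hs : 0 < s) (z : Fin d → ℤ) :
    HasCompactSupport (cell s z) :=
  (bump_hasCompactSupport d).comp_homeomorph
    ((Homeomorph.smulOfNeZero s⁻¹ (inv_ne_zero hs.ne')).trans
      (Homeomorph.subRight (latticePoint z)))

lemma sum_cell {d : ℕ} {s : ℝ} {x : Euc d} {z : Fin d → ℤ} (h : ∀ i, |s⁻¹ * x i - z i| ≤ 2) :
    ∑ w ∈ nbr z, cell s w x = 1 := sum_bump (x := s⁻¹ • x) h

lemma tsum_cell {d : ℕ} (s : ℝ) (x : Euc d) : ∑' z, ENNReal.ofReal (cell s z x) = 1 := by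
  set z₀ : Fin d → ℤ := fun i => round (s⁻¹ * x i)
  have hz₀ : ∀ i, |s⁻¹ * x i - z₀ i| ≤ 1 := fun i =>
    (abs_sub_round (s⁻¹ * x i)).trans (by norm_num)
  rw [tsum_eq_sum (s := nbr z₀), ← ENNReal.ofReal_sum_of_nonneg fun _ _ => cell_nonneg _ _ _,
    sum_cell fun i => (hz₀ i).trans (by norm_num), ENNReal.ofReal_one]
  intro w hw
  rw [ENNReal.ofReal_eq_zero]
  by_contra! hne
  refine hw (mem_nbr.2 fun i => ?_)
  have h1 := abs_le.1 (hz₀ i)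
  have h2 := abs_lt.1 (abs_lt_of_cell_ne_zero hne.ne' i)
  have : |((z₀ i - w i : ℤ) : ℝ)| ≤ (2 : ℤ) := by
    push_cast; rw [abs_le]; constructor <;> linarith [h1.1, h1.2, h2.1, h2.2]
  exact_mod_cast this

lemma integral_cell {d : ℕ} {s : ℝ} (hs : 0 < s) (z : Fin d → ℤ) :
    ∫ x, cell s z x = s ^ d * ∫ x, bump d x := by
  have := Measure.integral_comp_inv_smul_of_nonneg (volume : Measure (Euc d))
    (fun y => bump d (y - latticePoint z)) hs.le
  rw [integral_sub_right_eq_self (fun y => bump d y), finrank_euclideanSpace_fin] at this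
  exact this

lemma fderiv_cell {d : ℕ} (s : ℝ) (z : Fin d → ℤ) (x : Euc d) :
    fderiv ℝ (cell s z) x = s⁻¹ • fderiv ℝ (bump d) (s⁻¹ • x - latticePoint z) := by
  have h1 : HasFDerivAt (bump d) (fderiv ℝ (bump d) (s⁻¹ • x - latticePoint z))
      (s⁻¹ • x - latticePoint z) :=
    ((bump_contDiff d).differentiable (by simp) _).hasFDerivAt
  have h2 : HasFDerivAt (fun x : Euc d => s⁻¹ • x - latticePoint z)
      (s⁻¹ • ContinuousLinearMap.id ℝ (Euc d)) x :=
    ((hasFDerivAt_id x).const_smul s⁻¹).sub_const _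
  have h3 : HasFDerivAt (cell s z) _ x := h1.comp x h2
  rw [h3.fderiv]
  ext v; simp

lemma integral_norm_fderiv_cell {d : ℕ} {s : ℝ} (hs : 0 < s) (z : Fin d → ℤ) :
    ∫ x, ‖fderiv ℝ (cell s z) x‖ = s⁻¹ * (s ^ d * ∫ x, ‖fderiv ℝ (bump d) x‖) := by
  have := Measure.integral_comp_inv_smul_of_nonneg (volume : Measure (Euc d))
    (fun y => ‖fderiv ℝ (bump d) (y - latticePoint z)‖) hs.le
  rw [integral_sub_right_eq_self (fun y => ‖fderiv ℝ (bump d) y‖),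
    finrank_euclideanSpace_fin] at this
  simp_rw [fderiv_cell, norm_smul, integral_const_mul]
  rw [this, smul_eq_mul, Real.norm_of_nonneg (inv_nonneg.2 hs.le)]

/-- The neighbouring cells add up to `1` on a whole neighbourhood of `tsupport (cell s z)`. -/
lemma sum_fderiv_cell {d : ℕ} {s : ℝ} {x : Euc d} {z : Fin d → ℤ}
    (hx : x ∈ tsupport (cell s z)) : ∑ w ∈ nbr z, fderiv ℝ (cell s w) x = 0 := by
  have hev : (fun y => ∑ w ∈ nbr z, cell s w y) =ᶠ[nhds x] fun _ => 1 := by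
    have ho : IsOpen {y : Euc d | ∀ i, |s⁻¹ * y i - z i| < 2} := by
      simp only [Set.ofPred_forall]
      exact isOpen_iInter_of_finite fun i => isOpen_lt
        (((continuous_const.mul (EuclideanSpace.proj (𝕜 := ℝ) i).continuous).sub
          continuous_const).abs) continuous_const
    filter_upwards [ho.mem_nhds fun i => (abs_le_of_mem_tsupport_cell hx i).trans_lt
      (by norm_num)] with y hy
    exact sum_cell fun i => (hy i).le
  rw [← fderiv_fun_sum fun w _ => (cell_contDiff s w).differentiable (by simp) _,
    hev.fderiv_eq, fderiv_fun_const, Pi.zero_apply]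

lemma mem_nbr_of_tsupport {d : ℕ} {s : ℝ} {x : Euc d} {z w : Fin d → ℤ}
    (hz : x ∈ tsupport (cell s z)) (hw : x ∈ tsupport (cell s w)) : w ∈ nbr z := by
  refine mem_nbr.2 fun i => ?_
  have h1 := abs_le.1 (abs_le_of_mem_tsupport_cell hz i)
  have h2 := abs_le.1 (abs_le_of_mem_tsupport_cell hw i)
  have : |((z i - w i : ℤ) : ℝ)| ≤ (2 : ℤ) := by
    push_cast; rw [abs_le]; constructor <;> linarith [h1.1, h1.2, h2.1, h2.2]
  exact_mod_cast this

/-! ### Averaging over balls of radius `r` -/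

lemma chi_eq (d : ℕ) (r : ℝ) : chi d r = (closedBall (0 : Euc d) r).indicator
    fun _ => (volume (closedBall (0 : Euc d) r)).toReal⁻¹ := by
  ext x
  by_cases hx : x ∈ closedBall (0 : Euc d) r <;> simp [chi, hx]

lemma chi_nonneg {d : ℕ} {r : ℝ} (x : Euc d) : 0 ≤ chi d r x := by
  rw [chi_eq]
  exact indicator_nonneg (fun _ _ => by positivity) _

lemma chi_le {d : ℕ} {r : ℝ} (x : Euc d) :
    chi d r x ≤ (volume (closedBall (0 : Euc d) r)).toReal⁻¹ := by
  rw [chi_eq]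
  exact indicator_le_self' (fun _ _ => by positivity) _

lemma norm_le_of_chi_ne_zero {d : ℕ} {r : ℝ} {x : Euc d} (h : chi d r x ≠ 0) : ‖x‖ ≤ r := by
  rw [chi_eq] at h
  exact mem_closedBall_zero_iff.1 (mem_of_indicator_ne_zero h)

lemma chi_neg {d : ℕ} {r : ℝ} (x : Euc d) : chi d r (-x) = chi d r x := by
  have : (-x ∈ closedBall (0 : Euc d) r) = (x ∈ closedBall (0 : Euc d) r) := by simp
  simp only [chi, indicator, this]
  congr

lemma chi_measurable (d : ℕ) (r : ℝ) : Measurable (chi d r) := by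
  rw [chi_eq]
  exact measurable_const.indicator isClosed_closedBall.measurableSet

lemma chi_integrable (d : ℕ) (r : ℝ) : Integrable (chi d r) := by
  rw [chi_eq]
  exact (integrable_indicator_iff isClosed_closedBall.measurableSet).2
    (integrableOn_const (isCompact_closedBall _ _).measure_lt_top.ne)

lemma integral_chi {d : ℕ} {r : ℝ} (hr : 0 < r) : ∫ x, chi d r x = 1 := by
  rw [chi_eq, integral_indicator isClosed_closedBall.measurableSet, setIntegral_const, smul_eq_mul]
  refine mul_inv_cancel₀ (ENNReal.toReal_ne_zero.2 ⟨?_, ?_⟩)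
  · exact (measure_closedBall_pos _ _ hr).ne'
  · exact (isCompact_closedBall _ _).measure_lt_top.ne

lemma chi_hasCompactSupport (d : ℕ) (r : ℝ) : HasCompactSupport (chi d r) :=
  HasCompactSupport.of_support_subset_isCompact (isCompact_closedBall 0 r) fun _ hx =>
    mem_closedBall_zero_iff.2 (norm_le_of_chi_ne_zero hx)

/-- The average `χ_r * ψ` of a scalar function over balls of radius `r`. -/
def smear {d : ℕ} (r : ℝ) (ψ : Euc d → ℝ) : Euc d → ℝ :=
  convolution (chi d r) ψ (ContinuousLinearMap.lsmul ℝ ℝ) volume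

lemma smear_apply {d : ℕ} (r : ℝ) (ψ : Euc d → ℝ) (x : Euc d) :
    smear r ψ x = ∫ t, chi d r t * ψ (x - t) := rfl

lemma smear_contDiff {d : ℕ} (r : ℝ) {ψ : Euc d → ℝ} (h1 : ContDiff ℝ (⊤ : ℕ∞) ψ)
    (h2 : HasCompactSupport ψ) : ContDiff ℝ (⊤ : ℕ∞) (smear r ψ) :=
  h2.contDiff_convolution_right _ (chi_integrable d r).locallyIntegrable h1

lemma smear_hasCompactSupport {d : ℕ} (r : ℝ) {ψ : Euc d → ℝ} (h2 : HasCompactSupport ψ) :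
    HasCompactSupport (smear r ψ) := (chi_hasCompactSupport d r).convolution _ h2

lemma integral_smear {d : ℕ} {r : ℝ} (hr : 0 < r) {ψ : Euc d → ℝ} (h : Integrable ψ) :
    ∫ x, smear r ψ x = ∫ x, ψ x := by
  rw [smear, integral_convolution _ (chi_integrable d r) h, integral_chi hr]
  simp

lemma smear_nonneg {d : ℕ} (r : ℝ) {ψ : Euc d → ℝ} (h : ∀ x, 0 ≤ ψ x) (x : Euc d) :
    0 ≤ smear r ψ x := integral_nonneg fun _ => mul_nonneg (chi_nonneg _) (h _)

lemma exists_of_smear_ne_zero {d : ℕ} {r : ℝ} {ψ : Euc d → ℝ} {x : Euc d}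
    (h : smear r ψ x ≠ 0) : ∃ t, ‖t‖ ≤ r ∧ ψ (x - t) ≠ 0 := by
  by_contra! hne
  refine h ?_
  rw [smear_apply]
  refine integral_eq_zero_of_ae (Filter.Eventually.of_forall fun t => ?_)
  by_cases ht : chi d r t = 0
  · simp [ht]
  · simp [hne t (norm_le_of_chi_ne_zero ht)]

/-- Averaging turns a partition of unity into a partition of unity. -/
lemma tsum_smear {d : ℕ} {ι : Type*} [Countable ι] {r : ℝ} (hr : 0 < r) (ψ : ι → Euc d → ℝ)
    (h0 : ∀ i x, 0 ≤ ψ i x) (hc : ∀ i, Continuous (ψ i)) (hs : ∀ i, HasCompactSupport (ψ i))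
    (hsum : ∀ x, ∑' i, ENNReal.ofReal (ψ i x) = 1) (x : Euc d) :
    ∑' i, ENNReal.ofReal (smear r (ψ i) x) = 1 := by
  have hi : ∀ i, ENNReal.ofReal (smear r (ψ i) x) =
      ∫⁻ t, ENNReal.ofReal (chi d r t) * ENNReal.ofReal (ψ i (x - t)) := by
    intro i
    rw [smear_apply, ofReal_integral_eq_lintegral_ofReal]
    · exact lintegral_congr fun t => ENNReal.ofReal_mul (chi_nonneg t)
    · exact ((hs i).convolutionExists_right (ContinuousLinearMap.lsmul ℝ ℝ)
        (chi_integrable d r).locallyIntegrable (hc i)) x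
    · exact Filter.Eventually.of_forall fun t => mul_nonneg (chi_nonneg t) (h0 i _)
  simp_rw [hi]
  rw [← lintegral_tsum]
  · simp_rw [ENNReal.tsum_mul_left, hsum, mul_one]
    rw [← ofReal_integral_eq_lintegral_ofReal (chi_integrable d r)
      (Filter.Eventually.of_forall chi_nonneg), integral_chi hr, ENNReal.ofReal_one]
  · intro i
    exact ((chi_measurable d r).ennreal_ofReal.mul
      ((hc i).measurable.comp (measurable_const.sub measurable_id)).ennreal_ofReal).aemeasurable

lemma fderiv_smear {d : ℕ} (r : ℝ) {ψ : Euc d → ℝ} (h1 : ContDiff ℝ (⊤ : ℕ∞) ψ)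
    (h2 : HasCompactSupport ψ) (y u : Euc d) :
    fderiv ℝ (smear r ψ) y u = ∫ t, chi d r t * fderiv ℝ ψ (y - t) u := by
  have hloc := (chi_integrable d r).locallyIntegrable
  have hc : ContDiff ℝ 1 ψ := h1.of_le (by exact_mod_cast le_top)
  rw [smear, (h2.hasFDerivAt_convolution_right _ hloc hc y).fderiv,
    convolution_precompR_apply _ hloc (h2.fderiv ℝ) (hc.continuous_fderiv one_ne_zero)]
  rfl

lemma convChi_aestronglyMeasurable {d : ℕ} {v : Euc d → Euc d} (r : ℝ)
    (hv : LocallyIntegrable v volume) : AEStronglyMeasurable (convChi v r) volume := by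
  have : AEStronglyMeasurable (fun p : Euc d × Euc d => chi d r (p.1 - p.2) • v p.2)
      (volume.prod volume) :=
    ((chi_measurable d r).comp (measurable_fst.sub measurable_snd)).aestronglyMeasurable.smul
      hv.aestronglyMeasurable.comp_snd
  exact this.integral_prod_right'

lemma integrable_chi_smul {d : ℕ} {v : Euc d → Euc d} (r : ℝ)
    (hv : LocallyIntegrable v volume) (x : Euc d) :
    Integrable fun y => chi d r (x - y) • v y := by
  have hi : Integrable ((closedBall x r).indicator v) :=
    (integrable_indicator_iff isClosed_closedBall.measurableSet).2
      (hv.integrableOn_isCompact (isCompact_closedBall x r))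
  refine (hi.norm.const_mul (volume (closedBall (0 : Euc d) r)).toReal⁻¹).mono'
    (((chi_measurable d r).comp
      (measurable_const.sub measurable_id)).aestronglyMeasurable.smul hv.aestronglyMeasurable)
    (Filter.Eventually.of_forall fun y => ?_)
  by_cases hy : chi d r (x - y) = 0
  · simp only [hy, zero_smul, norm_zero]; positivity
  · have hm : y ∈ closedBall x r := by
      rw [mem_closedBall, dist_comm, dist_eq_norm]; exact norm_le_of_chi_ne_zero hy
    rw [norm_smul, indicator_of_mem hm, Real.norm_of_nonneg (chi_nonneg _)]
    exact mul_le_mul_of_nonneg_right (chi_le _) (norm_nonneg _)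

/-- Since `χ_r` is even, convolution with it is symmetric: testing `v * χ_r` against `∇ψ` is the
same as testing `v` against `∇(χ_r * ψ)`. -/
lemma integral_fderiv_convChi {d : ℕ} {v : Euc d → Euc d} (r : ℝ)
    (hv : LocallyIntegrable v volume) {ψ : Euc d → ℝ} (h1 : ContDiff ℝ (⊤ : ℕ∞) ψ)
    (h2 : HasCompactSupport ψ) :
    ∫ x, fderiv ℝ ψ x (convChi v r x) = ∫ y, fderiv ℝ (smear r ψ) y (v y) := by
  have hcont : Continuous (fderiv ℝ ψ) := h1.continuous_fderiv (by simp)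
  set K : Set (Euc d) := cthickening r (tsupport ψ) with hK
  have hKc : IsCompact K := h2.isCompact.cthickening
  set c : ℝ := (volume (closedBall (0 : Euc d) r)).toReal⁻¹
  have hint : Integrable (Function.uncurry fun x y : Euc d => chi d r (x - y) * fderiv ℝ ψ x (v y))
      (volume.prod volume) := by
    have hi : Integrable (K.indicator v) :=
      (integrable_indicator_iff hKc.measurableSet).2 (hv.integrableOn_isCompact hKc)
    have hD : Integrable (fderiv ℝ ψ) := hcont.integrable_of_hasCompactSupport (h2.fderiv ℝ)
    refine ((hD.norm.const_mul c).mul_prod hi.norm).mono' ?_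
      (Filter.Eventually.of_forall fun p => ?_)
    · refine ((chi_measurable d r).comp
        (measurable_fst.sub measurable_snd)).aestronglyMeasurable.mul ?_
      exact (ContinuousLinearMap.id ℝ (Euc d →L[ℝ] ℝ)).aestronglyMeasurable_comp₂
        hcont.aestronglyMeasurable.comp_fst hv.aestronglyMeasurable.comp_snd
    · obtain ⟨x, y⟩ := p
      simp only [Function.uncurry_apply_pair]
      by_cases hy : chi d r (x - y) = 0
      · simp only [hy, zero_mul, norm_zero]; positivity
      by_cases hx : x ∈ tsupport ψ
      · have hyK : y ∈ K := by
          refine mem_cthickening_of_dist_le y x r _ hx ?_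
          rw [dist_comm, dist_eq_norm]; exact norm_le_of_chi_ne_zero hy
        rw [norm_mul, indicator_of_mem hyK, Real.norm_of_nonneg (chi_nonneg _), mul_assoc]
        exact mul_le_mul (chi_le _) ((fderiv ℝ ψ x).le_opNorm _) (norm_nonneg _) (by positivity)
      · rw [fderiv_of_notMem_tsupport ℝ hx]; simp
  calc ∫ x, fderiv ℝ ψ x (convChi v r x)
      = ∫ x, ∫ y, chi d r (x - y) * fderiv ℝ ψ x (v y) := by
        congr 1; ext x
        rw [convChi, ← ContinuousLinearMap.integral_comp_comm _ (integrable_chi_smul r hv x)]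
        simp
    _ = ∫ y, ∫ x, chi d r (x - y) * fderiv ℝ ψ x (v y) := integral_integral_swap hint
    _ = ∫ y, fderiv ℝ (smear r ψ) y (v y) := by
        congr 1; ext y
        rw [fderiv_smear r h1 h2, ← integral_sub_left_eq_self _ volume y]
        congr 1; ext t
        rw [sub_sub_cancel_left, chi_neg]

/-- Weakly, `div (v * χ_r) = ν * χ_r - m`, expressed without smoothing `ν`: the average is put on
the test function. -/
lemma Connects.fderiv_convChi {d : ℕ} {v : Euc d → Euc d} {ν : Measure (Euc d)}
    (h : Connects v ν) {r : ℝ} (hr : 0 < r) (hv : LocallyIntegrable v volume) {ψ : Euc d → ℝ}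
    (h1 : ContDiff ℝ (⊤ : ℕ∞) ψ) (h2 : HasCompactSupport ψ) :
    ∫ x, fderiv ℝ ψ x (convChi v r x) = (∫ x, ψ x) - ∫ x, smear r ψ x ∂ν := by
  rw [integral_fderiv_convChi r hv h1 h2,
    ← integral_smear hr (h1.continuous.integrable_of_hasCompactSupport h2),
    ← h _ (smear_contDiff r h1 h2) (smear_hasCompactSupport r h2)]
  congr 1; ext y
  rw [real_inner_comm, gradient, InnerProductSpace.toDual_symm_apply]

/-! ### The flow between neighbouring cells -/

lemma integrable_mul_fderiv {d : ℕ} {V : Euc d → Euc d} {M : ℝ}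
    (hVm : AEStronglyMeasurable V volume) (hVM : ∀ᵐ x, ‖V x‖ ≤ M) {g ψ : Euc d → ℝ}
    (hg : Continuous g) (hg1 : ∀ x, |g x| ≤ 1) (h1 : ContDiff ℝ (⊤ : ℕ∞) ψ)
    (h2 : HasCompactSupport ψ) :
    Integrable (fun x => g x * fderiv ℝ ψ x (V x)) ∧
      |∫ x, g x * fderiv ℝ ψ x (V x)| ≤ M * ∫ x, ‖fderiv ℝ ψ x‖ := by
  have hcont : Continuous (fderiv ℝ ψ) := h1.continuous_fderiv (by simp)
  have hD : Integrable fun x => M * ‖fderiv ℝ ψ x‖ :=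
    (hcont.integrable_of_hasCompactSupport (h2.fderiv ℝ)).norm.const_mul M
  have hb : ∀ᵐ x, ‖g x * fderiv ℝ ψ x (V x)‖ ≤ M * ‖fderiv ℝ ψ x‖ := by
    filter_upwards [hVM] with x hx
    calc ‖g x * fderiv ℝ ψ x (V x)‖ = |g x| * ‖fderiv ℝ ψ x (V x)‖ := by
          rw [norm_mul, Real.norm_eq_abs]
      _ ≤ 1 * (‖fderiv ℝ ψ x‖ * ‖V x‖) :=
          mul_le_mul (hg1 x) ((fderiv ℝ ψ x).le_opNorm _) (norm_nonneg _) zero_le_one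
      _ ≤ M * ‖fderiv ℝ ψ x‖ := by
          rw [one_mul, mul_comm]; exact mul_le_mul_of_nonneg_right hx (norm_nonneg _)
  refine ⟨hD.mono' (hg.aestronglyMeasurable.mul ?_) hb, ?_⟩
  · exact (ContinuousLinearMap.id ℝ (Euc d →L[ℝ] ℝ)).aestronglyMeasurable_comp₂
      hcont.aestronglyMeasurable hVm
  · rw [← integral_const_mul]
    exact norm_integral_le_of_norm_le hD hb

/-- The amount of mass sent by the vector field `V` from the cell `z` to the cell `w`. It is the
antisymmetrization of `-∫ cell w * ⟨∇(cell z), V⟩`, and plays the role of the flux of `V` through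
the common face of two adjacent cubes. -/
def flow {d : ℕ} (s : ℝ) (V : Euc d → Euc d) (z w : Fin d → ℤ) : ℝ :=
  (∫ x, cell s z x * fderiv ℝ (cell s w) x (V x)) -
    ∫ x, cell s w x * fderiv ℝ (cell s z) x (V x)

lemma flow_swap {d : ℕ} (s : ℝ) (V : Euc d → Euc d) (z w : Fin d → ℤ) :
    flow s V w z = -flow s V z w := by
  unfold flow; ring

lemma flow_eq_zero {d : ℕ} {s : ℝ} (V : Euc d → Euc d) {z w : Fin d → ℤ} (h : w ∉ nbr z) :
    flow s V z w = 0 := by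
  have key : ∀ z w : Fin d → ℤ, w ∉ nbr z →
      ∫ x, cell s z x * fderiv ℝ (cell s w) x (V x) = 0 := by
    intro z w h
    refine integral_eq_zero_of_ae (Filter.Eventually.of_forall fun x => ?_)
    by_cases hz : x ∈ tsupport (cell s z)
    · have hw : x ∉ tsupport (cell s w) := fun hw => h (mem_nbr_of_tsupport hz hw)
      simp [fderiv_of_notMem_tsupport ℝ hw]
    · simp [image_eq_zero_of_notMem_tsupport hz]
  rw [flow, key z w h, key w z (fun h' => h (mem_nbr_comm.1 h')), sub_zero]

lemma abs_flow_le {d : ℕ} {s : ℝ} (hs : 0 < s) {V : Euc d → Euc d} {M : ℝ}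
    (hVm : AEStronglyMeasurable V volume) (hVM : ∀ᵐ x, ‖V x‖ ≤ M) (z w : Fin d → ℤ) :
    |flow s V z w| ≤ 2 * (M * (s⁻¹ * (s ^ d * ∫ x, ‖fderiv ℝ (bump d) x‖))) := by
  have hc1 : ∀ z x, |cell (d := d) s z x| ≤ 1 := fun z x => by
    rw [abs_of_nonneg (cell_nonneg s z x)]; exact cell_le_one s z x
  have key : ∀ z w : Fin d → ℤ, |∫ x, cell s z x * fderiv ℝ (cell s w) x (V x)| ≤
      M * (s⁻¹ * (s ^ d * ∫ x, ‖fderiv ℝ (bump d) x‖)) := by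
    intro z w
    rw [← integral_norm_fderiv_cell hs w]
    exact (integrable_mul_fderiv hVm hVM (cell_contDiff s z).continuous (hc1 z)
      (cell_contDiff s w) (cell_hasCompactSupport hs w)).2
  calc |flow s V z w| ≤ _ := abs_sub _ _
    _ ≤ _ := by linarith [key z w, key w z]

/-- The net outflow from the cell `z` is `∫ cell z * div V` in the weak sense: near the support of
`cell z` the neighbouring cells add up to `1` and their gradients to `0`. -/
lemma sum_flow {d : ℕ} {s : ℝ} (hs : 0 < s) {V : Euc d → Euc d} {M : ℝ}
    (hVm : AEStronglyMeasurable V volume) (hVM : ∀ᵐ x, ‖V x‖ ≤ M) (z : Fin d → ℤ) :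
    ∑ w ∈ nbr z, flow s V z w = -∫ x, fderiv ℝ (cell s z) x (V x) := by
  have hc1 : ∀ z x, |cell (d := d) s z x| ≤ 1 := fun z x => by
    rw [abs_of_nonneg (cell_nonneg s z x)]; exact cell_le_one s z x
  have hint : ∀ z w : Fin d → ℤ, Integrable fun x => cell s z x * fderiv ℝ (cell s w) x (V x) :=
    fun z w => (integrable_mul_fderiv hVm hVM (cell_contDiff s z).continuous (hc1 z)
      (cell_contDiff s w) (cell_hasCompactSupport hs w)).1
  unfold flow
  rw [← integral_neg, Finset.sum_congr rfl fun w _ => (integral_sub (hint z w) (hint w z)).symm,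
    ← integral_finsetSum (nbr z) (f := fun w x => cell s z x * fderiv ℝ (cell s w) x (V x) -
      cell s w x * fderiv ℝ (cell s z) x (V x)) fun w _ => (hint z w).sub (hint w z)]
  congr 1; ext x
  by_cases hx : x ∈ tsupport (cell s z)
  · rw [Finset.sum_sub_distrib, ← Finset.mul_sum, ← Finset.sum_mul,
      sum_cell fun i => (abs_le_of_mem_tsupport_cell hx i).trans (by norm_num)]
    have h0 : ∑ w ∈ nbr z, fderiv ℝ (cell s w) x (V x) = 0 := by
      rw [← _root_.sum_apply, sum_fderiv_cell hx]; rfl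
    rw [h0]; ring
  · simp [fderiv_of_notMem_tsupport ℝ hx, image_eq_zero_of_notMem_tsupport hx]

/-- A flow `f` on a locally finite graph with divergence `a - b` whose absolute values around each
vertex add up to at most `b` gives a transport matrix from `a` to `b` supported on the edges:
move `f i j` along each edge on which it is positive, and let the rest stay where it is. -/
lemma exists_matrix {ι : Type*} (N : ι → Finset ι) (hN : ∀ i j, j ∈ N i ↔ i ∈ N j)
    (hself : ∀ i, i ∈ N i) (f : ι → ι → ℝ) (hf : ∀ i j, f j i = -f i j)
    (hf0 : ∀ i j, j ∉ N i → f i j = 0) (a b : ι → ℝ)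
    (hsum : ∀ i, ∑ j ∈ N i, f i j = a i - b i) (hle : ∀ i, ∑ j ∈ N i, |f i j| ≤ b i) :
    ∃ t : ι → ι → ℝ≥0∞, (∀ i j, t i j ≠ 0 → j ∈ N i) ∧
      (∀ i, ∑' j, t i j = ENNReal.ofReal (a i)) ∧ ∀ j, ∑' i, t i j = ENNReal.ofReal (b j) := by
  classical
  -- `D i` is the mass staying at `i`: that part of `b i` which does not come from a neighbour.
  set D : ι → ℝ := fun i => b i - ∑ j ∈ N i, max (-f i j) 0 with hD
  have hD0 : ∀ i, 0 ≤ D i := fun i => by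
    refine sub_nonneg.2 ((Finset.sum_le_sum fun j _ => ?_).trans (hle i))
    exact max_le (neg_le_abs _) (abs_nonneg _)
  set T : ι → ι → ℝ := fun i j => max (f i j) 0 + if i = j then D i else 0 with hT
  have hT0 : ∀ i j, 0 ≤ T i j := fun i j => by
    have : 0 ≤ if i = j then D i else 0 := by split_ifs <;> simp [hD0]
    exact add_nonneg (le_max_right _ _) this
  have hTN : ∀ i j, j ∉ N i → T i j = 0 := fun i j hj => by
    have hij : i ≠ j := fun h => hj (h ▸ hself i)
    simp [hT, hf0 i j hj, hij]
  refine ⟨fun i j => ENNReal.ofReal (T i j), fun i j h => ?_, fun i => ?_, fun j => ?_⟩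
  · by_contra hj; simp [hTN i j hj] at h
  · rw [tsum_eq_sum (s := N i) fun j hj => by simp only [hTN i j hj, ENNReal.ofReal_zero],
      ← ENNReal.ofReal_sum_of_nonneg fun j _ => hT0 i j]
    congr 1
    have hpm : ∀ x : ℝ, max x 0 - max (-x) 0 = x := fun x => by
      rcases le_total x 0 with h | h
      · rw [max_eq_right h, max_eq_left (neg_nonneg.2 h)]; ring
      · rw [max_eq_left h, max_eq_right (neg_nonpos.2 h)]; ring
    have := hsum i
    rw [← Finset.sum_congr rfl fun j _ => hpm (f i j), Finset.sum_sub_distrib] at this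
    simp only [hT, Finset.sum_add_distrib, Finset.sum_ite_eq, hself, if_true, hD]
    linarith
  · rw [tsum_eq_sum (s := N j) fun i hi => by
      simp only [hTN i j fun h => hi ((hN i j).1 h), ENNReal.ofReal_zero],
      ← ENNReal.ofReal_sum_of_nonneg fun i _ => hT0 i j]
    congr 1
    simp only [hT, Finset.sum_add_distrib, Finset.sum_ite_eq', hself, if_true, hD]
    rw [Finset.sum_congr rfl fun i _ => by rw [hf j i]]
    ring

/-- If `v * χ_r` is bounded by `M` and the mesh `s` is at least a constant multiple of `M`, then the
inflow into each cell is at most its Lebesgue mass, so the flow gives a transportation of range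
`O(r + s)`. -/
lemma Tra_le_of_bound {d : ℕ} {ν : Measure (Euc d)} [IsLocallyFiniteMeasure ν]
    {v : Euc d → Euc d} (hv : LocallyIntegrable v volume) (hc : Connects v ν) {r s M : ℝ}
    (hr : 0 < r) (hs : 0 < s) (hM : ∀ᵐ x, ‖convChi v r x‖ ≤ M)
    (hsM : 2 * 5 ^ d * (∫ x, ‖fderiv ℝ (bump d) x‖) / (∫ x, bump d x) * M ≤ s) :
    Tra ν volume ≤ ENNReal.ofReal (2 * r + d * (4 * s)) := by
  set V := convChi v r with hV
  have hVm : AEStronglyMeasurable V volume := convChi_aestronglyMeasurable r hv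
  set θ : (Fin d → ℤ) → Euc d → ℝ := fun z => smear r (cell s z) with hθ
  have hθc : ∀ z, Continuous (θ z) := fun z =>
    (smear_contDiff r (cell_contDiff s z) (cell_hasCompactSupport hs z)).continuous
  have hθs : ∀ z, HasCompactSupport (θ z) := fun z =>
    smear_hasCompactSupport r (cell_hasCompactSupport hs z)
  have hθ0 : ∀ z x, 0 ≤ θ z x := fun z => smear_nonneg r (cell_nonneg s z)
  have hlint : ∀ (μ : Measure (Euc d)) [IsLocallyFiniteMeasure μ] z,
      ∫⁻ x, ENNReal.ofReal (θ z x) ∂μ = ENNReal.ofReal (∫ x, θ z x ∂μ) := fun μ _ z =>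
    (ofReal_integral_eq_lintegral_ofReal ((hθc z).integrable_of_hasCompactSupport (hθs z))
      (Filter.Eventually.of_forall (hθ0 z))).symm
  have hvol : ∀ z, ∫ x, θ z x = s ^ d * ∫ x, bump d x := fun z => by
    rw [hθ, integral_smear hr ((cell_contDiff s z).continuous.integrable_of_hasCompactSupport
      (cell_hasCompactSupport hs z)), integral_cell hs]
  obtain ⟨t, htN, hrow, hcol⟩ := exists_matrix nbr (fun _ _ => mem_nbr_comm)
    (fun z => mem_nbr.2 fun i => by simp) (flow s V) (flow_swap s V)
    (fun _ _ h => flow_eq_zero V h) (fun z => ∫ x, θ z x ∂ν) (fun z => ∫ x, θ z x)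
    (fun z => by
      rw [sum_flow hs hVm hM, hV, hc.fderiv_convChi hr hv (cell_contDiff s z)
        (cell_hasCompactSupport hs z), hθ, integral_smear hr
        ((cell_contDiff s z).continuous.integrable_of_hasCompactSupport
        (cell_hasCompactSupport hs z))]
      ring)
    (fun z => by
      refine (Finset.sum_le_card_nsmul _ _ _ fun w _ => abs_flow_le hs hVm hM z w).trans ?_
      rw [card_nbr, hvol, nsmul_eq_mul]
      push_cast
      have hI := integral_bump_pos d
      rw [div_mul_eq_mul_div, div_le_iff₀ hI] at hsM
      calc (5 : ℝ) ^ d * (2 * (M * (s⁻¹ * (s ^ d * ∫ x, ‖fderiv ℝ (bump d) x‖))))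
          = s⁻¹ * s ^ d * (2 * 5 ^ d * (∫ x, ‖fderiv ℝ (bump d) x‖) * M) := by ring
        _ ≤ s⁻¹ * s ^ d * (s * ∫ x, bump d x) :=
            mul_le_mul_of_nonneg_left hsM (by positivity)
        _ = s ^ d * ∫ x, bump d x := by field_simp)
  refine Tra_le_of_matrix ν volume (fun z x => ENNReal.ofReal (θ z x))
    (fun z => (hθc z).measurable.ennreal_ofReal)
    (tsum_smear hr (cell s) (fun z => cell_nonneg s z) (fun z => (cell_contDiff s z).continuous)
      (fun z => cell_hasCompactSupport hs z) (tsum_cell s))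
    t (fun z => by rw [hrow, hlint]) (fun z => by rw [hcol, hlint])
    (fun z => by rw [hlint]; exact ENNReal.ofReal_ne_top)
    (fun z => by rw [hlint]; exact ENNReal.ofReal_ne_top) _ fun z w x y ht hx hy => ?_
  have hnz : ∀ {z x}, ENNReal.ofReal (θ z x) ≠ 0 → smear r (cell s z) x ≠ 0 := fun h h0 =>
    h (by simp [hθ, h0])
  obtain ⟨p, hp, hxp⟩ := exists_of_smear_ne_zero (hnz hx)
  obtain ⟨q, hq, hyq⟩ := exists_of_smear_ne_zero (hnz hy)
  rw [edist_dist]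
  refine ENNReal.ofReal_le_ofReal ?_
  -- `x` and `y` are moved by at most `r` each into the supports of two neighbouring cells.
  have hco : ∀ i, |((x - p) - (y - q)) i| ≤ 4 * s := by
    intro i
    have h1 := abs_lt.1 (abs_lt_of_cell_ne_zero hxp i)
    have h2 := abs_lt.1 (abs_lt_of_cell_ne_zero hyq i)
    have h3 : |((z i - w i : ℤ) : ℝ)| ≤ (2 : ℤ) := by exact_mod_cast mem_nbr.1 (htN z w ht) i
    push_cast at h3
    have h3 := abs_le.1 h3
    rw [PiLp.sub_apply]
    have h4 : |s⁻¹ * ((x - p) i - (y - q) i)| ≤ 4 := by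
      rw [mul_sub, abs_le]; constructor <;> linarith [h1.1, h1.2, h2.1, h2.2, h3.1, h3.2]
    rw [abs_mul, abs_of_pos (inv_pos.2 hs), inv_mul_le_iff₀ hs] at h4
    linarith
  have hn := norm_le_of_abs_le hco
  calc dist x y = ‖((x - p) - (y - q)) + p - q‖ := by rw [dist_eq_norm]; congr 1; abel
    _ ≤ ‖((x - p) - (y - q)) + p‖ + ‖q‖ := norm_sub_le _ _
    _ ≤ ‖(x - p) - (y - q)‖ + ‖p‖ + ‖q‖ := by gcongr; exact norm_add_le _ _
    _ ≤ 2 * r + d * (4 * s) := by linarith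

/-- There is a constant `C > 0` depending only on `d` such that for every
locally finite nonnegative Borel measure `ν` on `ℝ^d` and every locally integrable vector
field `v` connecting `ν` and `m_d`, one has `Tra(ν) ≤ C·Ra(v)`; in particular
`Tra(ν) ≤ C · inf_v Ra(v)`. -/
theorem stmt_2 (d : ℕ) (hd : 1 ≤ d) :
    ∃ C : ℝ, 0 < C ∧
      ∀ ν : Measure (Euc d), IsLocallyFiniteMeasure ν →
        (∀ v : Euc d → Euc d, LocallyIntegrable v volume → Connects v ν →
          Tra ν volume ≤ ENNReal.ofReal C * Ra v) ∧
        Tra ν volume ≤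
          ENNReal.ofReal C *
            ⨅ v : {v : Euc d → Euc d // LocallyIntegrable v volume ∧ Connects v ν},
              Ra v.1 := by
  set K : ℝ := 2 * 5 ^ d * (∫ x, ‖fderiv ℝ (bump d) x‖) / (∫ x, bump d x) with hK
  have hK0 : 0 ≤ K := by
    have := integral_bump_pos d
    have : 0 ≤ ∫ x, ‖fderiv ℝ (bump d) x‖ := integral_nonneg fun _ => norm_nonneg _
    positivity
  have hC : 0 < 2 + 4 * d + 4 * d * K := by positivity
  refine ⟨2 + 4 * d + 4 * d * K, hC, fun ν hν => ?_⟩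
  have hC0 : ENNReal.ofReal (2 + 4 * d + 4 * d * K) ≠ 0 := by simpa using hC
  have main : ∀ v : Euc d → Euc d, LocallyIntegrable v volume → Connects v ν →
      Tra ν volume ≤ ENNReal.ofReal (2 + 4 * d + 4 * d * K) * Ra v := by
    intro v hv hc
    rw [Ra, ENNReal.mul_iInf_of_ne hC0 ENNReal.ofReal_ne_top]
    refine le_iInf fun r => ?_
    rw [ENNReal.mul_iInf_of_ne hC0 ENNReal.ofReal_ne_top]
    refine le_iInf fun hr => ?_
    set E := essSup (fun x => (‖convChi v r x‖₊ : ℝ≥0∞)) volume with hE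
    by_cases hEtop : E = ∞
    · rw [hEtop, add_top, ENNReal.mul_top hC0]; exact le_top
    have hM : ∀ᵐ x, ‖convChi v r x‖ ≤ E.toReal := by
      filter_upwards [ENNReal.ae_le_essSup fun x => (‖convChi v r x‖₊ : ℝ≥0∞)] with x hx
      simpa using ENNReal.toReal_mono hEtop hx
    have hE0 : 0 ≤ E.toReal := ENNReal.toReal_nonneg
    -- The mesh `K * M + r` is large enough for the flow, and positive even when `M = 0`.
    refine (Tra_le_of_bound hv hc hr (s := K * E.toReal + r) (by positivity) hM
      (by linarith)).trans ?_
    rw [← ENNReal.ofReal_toReal hEtop, ← ENNReal.ofReal_add hr.le hE0, ← ENNReal.ofReal_mul hC.le]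
    refine ENNReal.ofReal_le_ofReal ?_
    have h1 : 0 ≤ d * K * r := by positivity
    have h2 : 0 ≤ d * E.toReal := by positivity
    simp only [ENNReal.toReal_ofReal hE0]
    nlinarith
  refine ⟨main, ?_⟩
  rw [ENNReal.mul_iInf_of_ne hC0 ENNReal.ofReal_ne_top]
  exact le_iInf fun v => main v.1 v.2.1 v.2.2
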